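/- Poincaré–Sobolev inequality with asymmetric seminorm: let 1 ≤ p < ∞, 0 < s < 1, and q an exponent with p ≤ q ≤ p^*_s when sp < N (with q < ∞ if sp = N, q ≤ ∞ if sp > N). Then for every ball B_r(x_0) and every u ∈ C^∞_0(B_r(x_0)), ‖u‖^p_{L^q(B_r(x_0))} ≤ (2/λ^s_{p,q}(B_1)) · r^{sp − N + Np/q} · ∬_{B_r(x_0)×R^N} |u(x)−u(y)|^p/|x−y|^{N+sp} dx dy. -/

import Mathlib

open MeasureTheory Metric Filter
open scoped ENNReal

noncomputable section

abbrev Euc (N : ℕ) := EuclideanSpace ℝ (Fin N)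

/-- The (p-th power of the) Gagliardo–Slobodeckii seminorm on `ℝ^N`. -/
def gag (N : ℕ) (p s : ℝ) (u : Euc N → ℝ) : ℝ :=
  ∫ z : Euc N × Euc N, |u z.1 - u z.2| ^ p / ‖z.1 - z.2‖ ^ ((N : ℝ) + s * p)

/-- `u ∈ C^∞_0(Ω)`: smooth with compact support contained in `Ω`. -/
def TestOn {N : ℕ} (Ω : Set (Euc N)) (u : Euc N → ℝ) : Prop :=
  ContDiff ℝ (⊤ : ℕ∞) u ∧ HasCompactSupport u ∧ tsupport u ⊆ Ω

/-- The fractional principal frequency `λ^s_{p,q}(Ω)`. -/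
def lam (N : ℕ) (p q s : ℝ) (Ω : Set (Euc N)) : ℝ :=
  sInf { c | ∃ u : Euc N → ℝ, TestOn Ω u ∧ (∫ x in Ω, |u x| ^ q) = 1 ∧ c = gag N p s u }

/-- The homogeneous relative `(s,p)`-capacity of `A` in `E`. -/
def fcap (N : ℕ) (p s : ℝ) (A E : Set (Euc N)) : ℝ :=
  sInf { c | ∃ φ : Euc N → ℝ, TestOn E φ ∧ (∀ x ∈ A, 1 ≤ φ x) ∧ c = gag N p s φ }

/-- The fractional `s`-perimeter of a set `A ⊆ ℝ^N`. -/
def sPer (N : ℕ) (s : ℝ) (A : Set (Euc N)) : ℝ :=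
  ∫ z : Euc N × Euc N,
    |A.indicator (fun _ => (1 : ℝ)) z.1 - A.indicator (fun _ => (1 : ℝ)) z.2| /
      ‖z.1 - z.2‖ ^ ((N : ℝ) + s)

/-- An open set with smooth boundary, described as a regular sublevel set of a smooth function. -/
def SmoothBdry {N : ℕ} (O : Set (Euc N)) : Prop :=
  ∃ f : Euc N → ℝ, ContDiff ℝ (⊤ : ℕ∞) f ∧ O = {x | f x < 0} ∧ ∀ x, f x = 0 → fderiv ℝ f x ≠ 0

/-- The sharp constant in the fractional Sobolev inequality. -/
def sobConst (N : ℕ) (p s : ℝ) : ℝ :=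
  sSup {c | ∃ u : Euc N → ℝ, TestOn Set.univ u ∧ gag N p s u = 1 ∧
    c = (∫ x, |u x| ^ ((N : ℝ) * p / (N - s * p))) ^ (((N : ℝ) - s * p) / N)}

/-- Membership in `W̃^{s,p}_0(Ω)`, the closure of `C^∞_0(Ω)` in `W^{s,p}(ℝ^N)`. -/
def MemW0 (N : ℕ) (p s : ℝ) (Ω : Set (Euc N)) (V : Euc N → ℝ) : Prop :=
  ∃ u : ℕ → Euc N → ℝ, (∀ n, TestOn Ω (u n)) ∧
    Filter.Tendsto (fun n => (∫ x, |u n x - V x| ^ p) + gag N p s (fun x => u n x - V x))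
      Filter.atTop (nhds 0)

/-- The relative (local) `p`-capacity of `A` in `E`. -/
def pcap (N : ℕ) (p : ℝ) (A E : Set (Euc N)) : ℝ :=
  sInf { c | ∃ φ : Euc N → ℝ, TestOn E φ ∧ (∀ x ∈ A, 1 ≤ φ x) ∧
    c = ∫ x in E, ‖fderiv ℝ φ x‖ ^ p }

/-- The sharp constant in the local `p`-Poincaré inequality on `E`. -/
def lamLoc (N : ℕ) (p : ℝ) (E : Set (Euc N)) : ℝ :=
  sInf { c | ∃ u : Euc N → ℝ, TestOn E u ∧ (∫ x in E, |u x| ^ p) = 1 ∧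
    c = ∫ x in E, ‖fderiv ℝ u x‖ ^ p }

/-- The compact set `A ⊆ closure (B_r(x0))` is `(s,p,γ)`-negligible. -/
def Negligible (N : ℕ) (p s γ : ℝ) (x0 : Euc N) (r : ℝ) (A : Set (Euc N)) : Prop :=
  fcap N p s A (ball x0 (2 * r)) ≤ γ * fcap N p s (closedBall x0 r) (ball x0 (2 * r))

/-- The fractional `(p,γ)`-capacitary inradius of order `s` of `Ω` (valued in `ℝ≥0∞`). -/
def capInr (N : ℕ) (p s γ : ℝ) (Ω : Set (Euc N)) : ℝ≥0∞ :=
  sSup {R | ∃ r : ℝ, 0 < r ∧ R = ENNReal.ofReal r ∧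
    ∃ x0 : Euc N, Negligible N p s γ x0 r (closedBall x0 r \ Ω)}

end

theorem aux_kernel_integrable (N : ℕ) (hN : 0 < N) (p s L M : ℝ) (hp : 1 ≤ p) (hs0 : 0 < s)
    (hs1 : s < 1) (hL : 0 ≤ L) (hM : 0 ≤ M) :
    Integrable (fun h : Euc N => (min (L * ‖h‖) M) ^ p / ‖h‖ ^ ((N : ℝ) + s * p)) := by
  have : Nonempty (Fin N) := ⟨⟨0, hN⟩⟩
  have hsp : 0 < s * p := by positivity
  have hsp1 : 0 < (1 - s) * p := mul_pos (by linarith) (by linarith)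
  rw [integrable_fun_norm_addHaar (volume : Measure (Euc N))
    (f := fun t : ℝ => (min (L * t) M) ^ p / t ^ ((N : ℝ) + s * p))]
  rw [← Set.Ioc_union_Ioi_eq_Ioi (zero_le_one (α := ℝ))]
  have hmeas : Measurable (fun y : ℝ => y ^ (Module.finrank ℝ (Euc N) - 1) •
      ((min (L * y) M) ^ p / y ^ ((N : ℝ) + s * p))) := by
    simp only [smul_eq_mul]
    fun_prop
  have hpow : ∀ y : ℝ, 0 < y → y ^ (Module.finrank ℝ (Euc N) - 1) = y ^ ((N : ℝ) - 1) := by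
    intro y hy
    rw [finrank_euclideanSpace_fin, ← Real.rpow_natCast, Nat.cast_sub hN, Nat.cast_one]
  refine IntegrableOn.union ?_ ?_
  · have h1 : IntegrableOn (fun y : ℝ => L ^ p * y ^ ((1 - s) * p - 1)) (Set.Ioc 0 1) := by
      have := (intervalIntegral.intervalIntegrable_rpow' (a := 0) (b := 1)
        (r := (1 - s) * p - 1) (by linarith))
      rw [intervalIntegrable_iff_integrableOn_Ioc_of_le zero_le_one] at this
      exact this.const_mul _
    refine Integrable.mono' h1 hmeas.aestronglyMeasurable ?_
    filter_upwards [ae_restrict_mem measurableSet_Ioc] with y hy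
    have hy0 : 0 < y := hy.1
    have hmin : 0 ≤ min (L * y) M := le_min (by positivity) hM
    rw [Real.norm_of_nonneg (by simp only [smul_eq_mul]; positivity), hpow y hy0, smul_eq_mul]
    calc y ^ ((N : ℝ) - 1) * (min (L * y) M ^ p / y ^ ((N : ℝ) + s * p))
        ≤ y ^ ((N : ℝ) - 1) * ((L * y) ^ p / y ^ ((N : ℝ) + s * p)) := by
          gcongr
          exact min_le_left _ _
      _ = L ^ p * y ^ ((1 - s) * p - 1) := by
          rw [Real.mul_rpow hL hy0.le]
          have : y ^ ((1 - s) * p - 1) =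
              y ^ ((N : ℝ) - 1) * y ^ p / y ^ ((N : ℝ) + s * p) := by
            rw [← Real.rpow_add hy0, ← Real.rpow_sub hy0]
            congr 1
            ring
          rw [this]
          ring
  · have h1 : IntegrableOn (fun y : ℝ => M ^ p * y ^ (-1 - s * p)) (Set.Ioi 1) :=
      (integrableOn_Ioi_rpow_of_lt (by linarith) one_pos).const_mul _
    refine Integrable.mono' h1 hmeas.aestronglyMeasurable ?_
    filter_upwards [ae_restrict_mem measurableSet_Ioi] with y hy
    have hy0 : 0 < y := one_pos.trans hy
    have hmin : 0 ≤ min (L * y) M := le_min (by positivity) hM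
    rw [Real.norm_of_nonneg (by simp only [smul_eq_mul]; positivity), hpow y hy0, smul_eq_mul]
    calc y ^ ((N : ℝ) - 1) * (min (L * y) M ^ p / y ^ ((N : ℝ) + s * p))
        ≤ y ^ ((N : ℝ) - 1) * (M ^ p / y ^ ((N : ℝ) + s * p)) := by
          gcongr
          exact min_le_right _ _
      _ = M ^ p * y ^ (-1 - s * p) := by
          have : y ^ (-1 - s * p) =
              y ^ ((N : ℝ) - 1) / y ^ ((N : ℝ) + s * p) := by
            rw [← Real.rpow_sub hy0]
            congr 1
            ring
          rw [this]
          ring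

theorem aux_testOn_zero {N : ℕ} {Ω : Set (Euc N)} {u : Euc N → ℝ} (hu : TestOn Ω u) {x : Euc N}
    (hx : x ∉ Ω) : u x = 0 :=
  image_eq_zero_of_notMem_tsupport (fun h => hx (hu.2.2 h))

theorem aux_gag_integrable (N : ℕ) (hN : 0 < N) (p s : ℝ) (hp : 1 ≤ p) (hs0 : 0 < s)
    (hs1 : s < 1) (x0 : Euc N) (r : ℝ) (u : Euc N → ℝ) (hu : TestOn (ball x0 r) u) :
    Integrable (fun z : Euc N × Euc N =>
      |u z.1 - u z.2| ^ p / ‖z.1 - z.2‖ ^ ((N : ℝ) + s * p)) := by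
  obtain ⟨L, hL⟩ := ContDiff.lipschitzWith_of_hasCompactSupport (𝕂 := ℝ) hu.2.1 hu.1 (by simp)
  have hcont : Continuous u := hu.1.continuous
  obtain ⟨C, hC⟩ := hu.2.1.exists_bound_of_continuous hcont
  have hC0 : 0 ≤ C := (norm_nonneg _).trans (hC 0)
  have hk := aux_kernel_integrable N hN p s L (C + C) hp hs0 hs1 L.2 (by linarith)
  have hB : Integrable ((ball x0 r).indicator (fun _ : Euc N => (1 : ℝ))) :=
    (integrable_indicator_iff measurableSet_ball).2
      (integrableOn_const measure_ball_lt_top.ne)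
  have h1 := Integrable.convolution_integrand (ContinuousLinearMap.mul ℝ ℝ) hB hk
  have h2 := h1.swap
  refine Integrable.mono' (h1.add h2) ?_ ?_
  · apply Measurable.aestronglyMeasurable
    have := hcont.measurable
    fun_prop
  · refine Eventually.of_forall ?_
    rintro ⟨x, y⟩
    have hp0 : p ≠ 0 := by linarith
    rw [Real.norm_of_nonneg (by positivity)]
    simp only [Pi.add_apply, Function.comp, Prod.swap, ContinuousLinearMap.mul_apply']
    rw [norm_sub_rev y x, ← add_mul]
    have hmin : |u x - u y| ≤ min (L * ‖x - y‖) (C + C) := by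
      refine le_min ?_ ?_
      · have := hL.dist_le_mul x y
        rwa [Real.dist_eq, dist_eq_norm] at this
      · have h1 := hC x
        have h2 := hC y
        rw [Real.norm_eq_abs] at h1 h2
        exact (abs_sub _ _).trans (add_le_add h1 h2)
    have hmin0 := (abs_nonneg _).trans hmin
    have key : |u x - u y| ^ p / ‖x - y‖ ^ ((N : ℝ) + s * p) ≤
        (min (L * ‖x - y‖) (C + C)) ^ p / ‖x - y‖ ^ ((N : ℝ) + s * p) := by
      gcongr
    by_cases hx : x ∈ ball x0 r
    · refine key.trans (le_mul_of_one_le_left (by positivity) ?_)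
      rw [Set.indicator_of_mem hx]
      have : 0 ≤ (ball x0 r).indicator (fun _ : Euc N => (1 : ℝ)) y :=
        Set.indicator_nonneg (fun _ _ => zero_le_one) _
      linarith
    · by_cases hy : y ∈ ball x0 r
      · refine key.trans (le_mul_of_one_le_left (by positivity) ?_)
        rw [Set.indicator_of_mem hy]
        have : 0 ≤ (ball x0 r).indicator (fun _ : Euc N => (1 : ℝ)) x :=
          Set.indicator_nonneg (fun _ _ => zero_le_one) _
        linarith
      · rw [aux_testOn_zero hu hx, aux_testOn_zero hu hy]
        simp [Real.zero_rpow hp0, hx, hy]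

theorem aux_pow_integrable {N : ℕ} {Ω : Set (Euc N)} {u : Euc N → ℝ} (hu : TestOn Ω u) {q : ℝ}
    (hq : 0 < q) : Integrable (fun x => |u x| ^ q) := by
  refine Continuous.integrable_of_hasCompactSupport ?_ ?_
  · exact (hu.1.continuous.abs).rpow_const (fun _ => Or.inr hq.le)
  · exact hu.2.1.comp_left (g := fun t : ℝ => |t| ^ q) (by simp [hq.ne'])

theorem aux_pow_setIntegral {N : ℕ} {Ω : Set (Euc N)} {u : Euc N → ℝ} (hu : TestOn Ω u) {q : ℝ}
    (hq : 0 < q) : ∫ x in Ω, |u x| ^ q = ∫ x, |u x| ^ q :=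
  setIntegral_eq_integral_of_forall_compl_eq_zero
    (fun x hx => by simp [aux_testOn_zero hu hx, hq.ne'])

theorem aux_ball_ineq (N : ℕ) (p q s : ℝ) (hp : 1 ≤ p) (hs0 : 0 < s) (hq : 0 < q)
    (u : Euc N → ℝ) (hq1 : Integrable (fun x => |u x| ^ q)) (hI : ∫ x, |u x| ^ q ≤ 1)
    (x : Euc N) (hx : u x ≠ 0)
    (hD : Integrable (fun y => |u x - u y| ^ p / ‖x - y‖ ^ ((N : ℝ) + s * p)))
    (R : ℝ) (hR : 0 < R) :
    volume.real (ball (0 : Euc N) 1) * R ^ N ≤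
      (2 / |u x|) ^ p * R ^ ((N : ℝ) + s * p) *
        (∫ y, |u x - u y| ^ p / ‖x - y‖ ^ ((N : ℝ) + s * p)) + (2 / |u x|) ^ q := by
  have ha : 0 < |u x| := abs_pos.2 hx
  have hsp : 0 < s * p := by positivity
  have hv : volume.real (ball x R) = volume.real (ball (0 : Euc N) 1) * R ^ N := by
    rw [measureReal_def, Measure.addHaar_ball_of_pos _ _ hR, finrank_euclideanSpace_fin,
      ENNReal.toReal_mul, ENNReal.toReal_ofReal (by positivity), measureReal_def, mul_comm]
  set f : Euc N → ℝ := fun y => |u x - u y| ^ p / ‖x - y‖ ^ ((N : ℝ) + s * p) with hf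
  have hf0 : ∀ y, 0 ≤ f y := fun y => by simp only [hf]; positivity
  have hg : Integrable (fun y => (2 / |u x|) ^ p * R ^ ((N : ℝ) + s * p) * f y +
      (2 / |u x|) ^ q * |u y| ^ q) := (hD.const_mul _).add (hq1.const_mul _)
  have hpt : ∀ y ∈ ball x R, 1 ≤ (2 / |u x|) ^ p * R ^ ((N : ℝ) + s * p) * f y +
      (2 / |u x|) ^ q * |u y| ^ q := by
    intro y hy
    have hd : ‖x - y‖ < R := by rw [← dist_eq_norm, dist_comm]; exact hy
    rcases le_or_gt (|u x| / 2) |u y| with h | h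
    · have h1 : 1 ≤ (2 / |u x|) ^ q * |u y| ^ q := by
        rw [← Real.mul_rpow (by positivity) (by positivity)]
        apply Real.one_le_rpow _ hq.le
        rw [div_mul_eq_mul_div, le_div_iff₀ ha]
        linarith
      have h2 : 0 ≤ (2 / |u x|) ^ p * R ^ ((N : ℝ) + s * p) * f y :=
        mul_nonneg (by positivity) (hf0 y)
      linarith
    · have h3 : |u x| / 2 ≤ |u x - u y| := by
        have := abs_sub_abs_le_abs_sub (u x) (u y)
        linarith
      have hne : x ≠ y := by
        rintro rfl
        linarith
      have hd0 : 0 < ‖x - y‖ := norm_pos_iff.2 (sub_ne_zero.2 hne)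
      have h4 : |u x - u y| ^ p ≤ R ^ ((N : ℝ) + s * p) * f y := by
        simp only [hf]
        rw [← mul_div_assoc, le_div_iff₀ (by positivity), mul_comm]
        gcongr
      have h1 : 1 ≤ (2 / |u x|) ^ p * |u x - u y| ^ p := by
        rw [← Real.mul_rpow (by positivity) (by positivity)]
        apply Real.one_le_rpow _ (by linarith)
        rw [div_mul_eq_mul_div, le_div_iff₀ ha]
        linarith
      have h2 : 0 ≤ (2 / |u x|) ^ q * |u y| ^ q := by positivity
      have h5 := mul_le_mul_of_nonneg_left h4 (show 0 ≤ (2 / |u x|) ^ p by positivity)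
      rw [← mul_assoc] at h5
      linarith
  calc volume.real (ball (0 : Euc N) 1) * R ^ N = ∫ y in ball x R, (1 : ℝ) := by
        rw [setIntegral_const, smul_eq_mul, mul_one, hv]
    _ ≤ ∫ y in ball x R, ((2 / |u x|) ^ p * R ^ ((N : ℝ) + s * p) * f y +
          (2 / |u x|) ^ q * |u y| ^ q) :=
        setIntegral_mono_on (integrableOn_const measure_ball_lt_top.ne) hg.integrableOn
          measurableSet_ball hpt
    _ ≤ ∫ y, ((2 / |u x|) ^ p * R ^ ((N : ℝ) + s * p) * f y +
          (2 / |u x|) ^ q * |u y| ^ q) :=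
        setIntegral_le_integral hg (Eventually.of_forall fun y =>
          add_nonneg (mul_nonneg (by positivity) (hf0 y)) (by positivity))
    _ = (2 / |u x|) ^ p * R ^ ((N : ℝ) + s * p) * (∫ y, f y) +
          (2 / |u x|) ^ q * ∫ y, |u y| ^ q := by
        rw [integral_add (hD.const_mul _) (hq1.const_mul _), integral_const_mul,
          integral_const_mul]
    _ ≤ _ := by
        have : (2 / |u x|) ^ q * ∫ y, |u y| ^ q ≤ (2 / |u x|) ^ q * 1 := by gcongr
        linarith

theorem aux_pointwise (N : ℕ) (hN : 0 < N) (p q s : ℝ) (hp : 1 ≤ p) (hs0 : 0 < s) (hq : 0 < q)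
    (u : Euc N → ℝ) (hq1 : Integrable (fun x => |u x| ^ q)) (hI : ∫ x, |u x| ^ q ≤ 1)
    (x : Euc N)
    (hD : Integrable (fun y => |u x - u y| ^ p / ‖x - y‖ ^ ((N : ℝ) + s * p))) :
    |u x| ^ (p + s * p * q / N) ≤
      2 ^ (p + s * p * q / N) * (2 / volume.real (ball (0 : Euc N) 1)) ^ (1 + s * p / N) *
        (∫ y, |u x - u y| ^ p / ‖x - y‖ ^ ((N : ℝ) + s * p)) := by
  have hN' : (0 : ℝ) < N := Nat.cast_pos.2 hN
  set V := volume.real (ball (0 : Euc N) 1) with hVdef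
  have hV : 0 < V := by
    rw [hVdef, measureReal_def]
    exact ENNReal.toReal_pos (measure_ball_pos _ _ one_pos).ne' measure_ball_lt_top.ne
  have hk : 0 < p + s * p * q / N := by positivity
  have hD0 : 0 ≤ ∫ y, |u x - u y| ^ p / ‖x - y‖ ^ ((N : ℝ) + s * p) :=
    integral_nonneg fun y => by positivity
  by_cases hx : u x = 0
  · rw [hx, abs_zero, Real.zero_rpow hk.ne']
    rw [hx] at hD0
    positivity
  have ha : 0 < |u x| := abs_pos.2 hx
  set b := 2 / |u x| with hb
  have hb0 : 0 < b := by positivity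
  set R := (2 / V * b ^ q) ^ (1 / (N : ℝ)) with hRdef
  have hR : 0 < R := by positivity
  have key := aux_ball_ineq N p q s hp hs0 hq u hq1 hI x hx hD R hR
  rw [← hVdef, ← hb] at key
  set D := ∫ y, |u x - u y| ^ p / ‖x - y‖ ^ ((N : ℝ) + s * p) with hDdef
  have hRN : R ^ N = 2 / V * b ^ q := by
    rw [hRdef, ← Real.rpow_natCast, ← Real.rpow_mul (by positivity), one_div,
      inv_mul_cancel₀ hN'.ne', Real.rpow_one]
  have hRs : R ^ ((N : ℝ) + s * p) = (2 / V) ^ (1 + s * p / N) * b ^ (q + s * p * q / N) := by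
    have e1 : 1 / (N : ℝ) * (N + s * p) = 1 + s * p / N := by field_simp
    rw [hRdef, ← Real.rpow_mul (by positivity), e1, Real.mul_rpow (by positivity) (by positivity),
      ← Real.rpow_mul hb0.le]
    congr 2
    ring
  have hVR : V * R ^ N = 2 * b ^ q := by rw [hRN]; field_simp
  rw [hVR, hRs] at key
  have e2 : b ^ p * ((2 / V) ^ (1 + s * p / N) * b ^ (q + s * p * q / N)) * D =
      b ^ q * (b ^ (p + s * p * q / N) * (2 / V) ^ (1 + s * p / N) * D) := by
    have : b ^ p * b ^ (q + s * p * q / N) = b ^ q * b ^ (p + s * p * q / N) := by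
      rw [← Real.rpow_add hb0, ← Real.rpow_add hb0]
      congr 1
      ring
    linear_combination (2 / V) ^ (1 + s * p / N) * D * this
  rw [e2] at key
  have hbq : 0 < b ^ q := by positivity
  have h1 : 1 ≤ b ^ (p + s * p * q / N) * (2 / V) ^ (1 + s * p / N) * D := by
    by_contra! h
    nlinarith
  have h2 := mul_le_mul_of_nonneg_left h1 (show 0 ≤ |u x| ^ (p + s * p * q / N) by positivity)
  rw [mul_one] at h2
  have e3 : |u x| ^ (p + s * p * q / N) * b ^ (p + s * p * q / N) = 2 ^ (p + s * p * q / N) := by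
    rw [← Real.mul_rpow ha.le hb0.le, hb, mul_div_cancel₀ _ ha.ne']
  calc _ ≤ _ := h2
    _ = _ := by rw [← e3]; ring

/-- Quantitative lower bound: the fractional Poincare-Sobolev inequality on the unit ball. -/
theorem aux_lower (N : ℕ) (hN : 0 < N) (p q s : ℝ) (hp : 1 ≤ p) (hs0 : 0 < s) (hs1 : s < 1)
    (hpq : p ≤ q) (hqc : s * p < N → q ≤ N * p / (N - s * p)) :
    ∃ c : ℝ, 0 < c ∧ ∀ u : Euc N → ℝ, TestOn (ball 0 1) u →
      (∫ x in ball (0 : Euc N) 1, |u x| ^ q) = 1 → c ≤ gag N p s u := by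
  have hN' : (0 : ℝ) < N := Nat.cast_pos.2 hN
  have hq : 0 < q := by linarith
  set V := volume.real (ball (0 : Euc N) 1) with hVdef
  have hV : 0 < V := by
    rw [hVdef, measureReal_def]
    exact ENNReal.toReal_pos (measure_ball_pos _ _ one_pos).ne' measure_ball_lt_top.ne
  set k := p + s * p * q / N with hkdef
  have hkq : q ≤ k := by
    have h1 : q * (N - s * p) ≤ N * p := by
      rcases lt_or_ge (s * p) N with h | h
      · have := hqc h
        rwa [le_div_iff₀ (by linarith)] at this
      · have : q * (N - s * p) ≤ 0 := mul_nonpos_of_nonneg_of_nonpos hq.le (by linarith)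
        have : 0 ≤ N * p := by positivity
        linarith
    have : k = (N * p + s * p * q) / N := by rw [hkdef]; field_simp
    rw [this, le_div_iff₀ hN']
    linarith
  set C := 2 ^ k * (2 / V) ^ (1 + s * p / N) with hC
  have hC0 : 0 < C := by positivity
  set δ := (1 / (2 * V)) ^ (1 / q) with hδ
  have hδ0 : 0 < δ := by positivity
  have hδq : δ ^ q * V = 1 / 2 := by
    rw [hδ, ← Real.rpow_mul (by positivity), one_div_mul_cancel hq.ne', Real.rpow_one]
    field_simp
  refine ⟨(1 / 2) / (δ ^ (q - k) * C), by positivity, ?_⟩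
  intro u hu h1
  have hint := aux_gag_integrable N hN p s hp hs0 hs1 0 1 u hu
  have hq1 := aux_pow_integrable hu hq
  have hI : ∫ x, |u x| ^ q ≤ 1 := by rw [← aux_pow_setIntegral hu hq, h1]
  have hDi : Integrable (fun x : Euc N =>
      ∫ y, |u x - u y| ^ p / ‖x - y‖ ^ ((N : ℝ) + s * p)) := hint.integral_prod_left
  have hcst : Integrable (fun _ : Euc N => δ ^ q) (volume.restrict (ball 0 1)) :=
    integrableOn_const measure_ball_lt_top.ne
  have hpt : ∀ᵐ x : Euc N, |u x| ^ q ≤ δ ^ q + δ ^ (q - k) * C *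
      (∫ y, |u x - u y| ^ p / ‖x - y‖ ^ ((N : ℝ) + s * p)) := by
    filter_upwards [hint.prod_right_ae] with x hx
    have hx1 := aux_pointwise N hN p q s hp hs0 hq u hq1 hI x hx
    rw [← hVdef, ← hkdef, ← hC] at hx1
    have hD0 : 0 ≤ ∫ y, |u x - u y| ^ p / ‖x - y‖ ^ ((N : ℝ) + s * p) :=
      integral_nonneg fun y => by positivity
    rcases le_or_gt |u x| δ with h | h
    · have : |u x| ^ q ≤ δ ^ q := by gcongr
      have : 0 ≤ δ ^ (q - k) * C *
        (∫ y, |u x - u y| ^ p / ‖x - y‖ ^ ((N : ℝ) + s * p)) := by positivity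
      linarith
    · have ha : 0 < |u x| := hδ0.trans h
      have e : |u x| ^ q = |u x| ^ (q - k) * |u x| ^ k := by
        rw [← Real.rpow_add ha]
        congr 1
        ring
      have h2 : |u x| ^ (q - k) ≤ δ ^ (q - k) :=
        Real.rpow_le_rpow_of_nonpos hδ0 h.le (by linarith)
      have h3 : |u x| ^ q ≤ δ ^ (q - k) * (C *
          ∫ y, |u x - u y| ^ p / ‖x - y‖ ^ ((N : ℝ) + s * p)) := by
        rw [e]
        gcongr
      have : 0 ≤ δ ^ q := by positivity
      rw [← mul_assoc] at h3
      linarith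
  have hgag : gag N p s u =
      ∫ x, ∫ y, |u x - u y| ^ p / ‖x - y‖ ^ ((N : ℝ) + s * p) := by
    unfold gag
    exact integral_prod _ hint
  have hfin : (1 : ℝ) ≤ 1 / 2 + δ ^ (q - k) * C * gag N p s u := by
    calc (1 : ℝ) = ∫ x in ball (0 : Euc N) 1, |u x| ^ q := h1.symm
      _ ≤ ∫ x in ball (0 : Euc N) 1, (δ ^ q + δ ^ (q - k) * C *
          (∫ y, |u x - u y| ^ p / ‖x - y‖ ^ ((N : ℝ) + s * p))) := by
          refine setIntegral_mono_ae hq1.integrableOn ?_ hpt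
          exact (integrableOn_const measure_ball_lt_top.ne).add (hDi.const_mul _).integrableOn
      _ = 1 / 2 + δ ^ (q - k) * C * ∫ x in ball (0 : Euc N) 1,
          (∫ y, |u x - u y| ^ p / ‖x - y‖ ^ ((N : ℝ) + s * p)) := by
          rw [integral_add hcst (hDi.const_mul _).integrableOn, integral_const_mul, setIntegral_const, smul_eq_mul,
            ← hVdef, mul_comm V, hδq]
      _ ≤ 1 / 2 + δ ^ (q - k) * C * gag N p s u := by
          rw [hgag]
          gcongr
          · exact Eventually.of_forall fun x => integral_nonneg fun y => by positivity
          · exact Measure.restrict_le_self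
  rw [div_le_iff₀ (by positivity)]
  linarith

theorem aux_gag_le (N : ℕ) (hN : 0 < N) (p s : ℝ) (hp : 1 ≤ p) (hs0 : 0 < s)
    (hs1 : s < 1) (x0 : Euc N) (r : ℝ) (u : Euc N → ℝ) (hu : TestOn (ball x0 r) u) :
    gag N p s u ≤ 2 * ∫ x in ball x0 r, ∫ y, |u x - u y| ^ p / ‖x - y‖ ^ ((N : ℝ) + s * p) := by
  have hint := aux_gag_integrable N hN p s hp hs0 hs1 x0 r u hu
  set f : Euc N × Euc N → ℝ := fun z =>
    |u z.1 - u z.2| ^ p / ‖z.1 - z.2‖ ^ ((N : ℝ) + s * p) with hf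
  have hf0 : ∀ z, 0 ≤ f z := fun z => by simp only [hf]; positivity
  set S : Set (Euc N × Euc N) := ball x0 r ×ˢ Set.univ with hS
  have hSm : MeasurableSet S := measurableSet_ball.prod MeasurableSet.univ
  have hi1 : Integrable (S.indicator f) := hint.indicator hSm
  have hi2 : Integrable (fun z : Euc N × Euc N => S.indicator f z.swap) := hi1.swap
  have hsw : ∀ z : Euc N × Euc N, f z.swap = f z := by
    rintro ⟨x, y⟩
    simp only [hf, Prod.swap]
    rw [abs_sub_comm, norm_sub_rev]
  have hle : ∀ z, f z ≤ S.indicator f z + S.indicator f z.swap := by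
    intro z
    have n1 : 0 ≤ S.indicator f z := Set.indicator_nonneg (fun z _ => hf0 z) _
    have n2 : 0 ≤ S.indicator f z.swap := Set.indicator_nonneg (fun z _ => hf0 z) _
    by_cases h1 : z ∈ S
    · rw [Set.indicator_of_mem h1] at *
      linarith
    · by_cases h2 : z.swap ∈ S
      · rw [Set.indicator_of_mem h2, hsw] at *
        linarith
      · have a1 : z.1 ∉ ball x0 r := fun h => h1 ⟨h, trivial⟩
        have a2 : z.2 ∉ ball x0 r := fun h => h2 ⟨h, trivial⟩
        have : f z = 0 := by
          simp only [hf]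
          rw [aux_testOn_zero hu a1, aux_testOn_zero hu a2, sub_zero, abs_zero,
            Real.zero_rpow (by linarith), zero_div]
        linarith
  have hval : ∫ z, S.indicator f z =
      ∫ x in ball x0 r, ∫ y, |u x - u y| ^ p / ‖x - y‖ ^ ((N : ℝ) + s * p) := by
    rw [integral_indicator hSm]
    have : (volume : Measure (Euc N × Euc N)) = (volume : Measure (Euc N)).prod volume := rfl
    rw [this, hS, setIntegral_prod f (by exact hint.integrableOn)]
    simp only [Measure.restrict_univ, hf]
  have hval2 : ∫ z : Euc N × Euc N, S.indicator f z.swap = ∫ z, S.indicator f z :=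
    integral_prod_swap (S.indicator f)
  calc gag N p s u = ∫ z, f z := rfl
    _ ≤ ∫ z, (S.indicator f z + S.indicator f z.swap) := integral_mono hint (hi1.add hi2) hle
    _ = _ := by rw [integral_add hi1 hi2, hval2, hval]; ring

theorem aux_testOn_scale {N : ℕ} (x0 : Euc N) (r : ℝ) (hr : 0 < r) (c : ℝ) (u : Euc N → ℝ)
    (hu : TestOn (ball x0 r) u) :
    TestOn (ball (0 : Euc N) 1) (fun y => c * u (x0 + r • y)) := by
  have hz : ∀ y, y ∉ (fun w : Euc N => r⁻¹ • (w - x0)) '' tsupport u → c * u (x0 + r • y) = 0 := by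
    intro y hy
    have h0 : u (x0 + r • y) = 0 := by
      apply image_eq_zero_of_notMem_tsupport
      intro h
      exact hy ⟨_, h, by simp [smul_smul, inv_mul_cancel₀ hr.ne']⟩
    rw [h0, mul_zero]
  have hK : IsCompact ((fun w : Euc N => r⁻¹ • (w - x0)) '' tsupport u) :=
    IsCompact.image hu.2.1 (by fun_prop)
  refine ⟨?_, HasCompactSupport.intro hK (fun y => hz y), ?_⟩
  · have h1 : ContDiff ℝ (⊤ : ℕ∞) (fun y : Euc N => x0 + r • y) :=
      contDiff_const.add (contDiff_id.const_smul r)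
    exact contDiff_const.mul (hu.1.comp h1)
  · have h1 : tsupport (fun y => c * u (x0 + r • y)) ⊆
        (fun w : Euc N => r⁻¹ • (w - x0)) '' tsupport u := by
      refine closure_minimal ?_ hK.isClosed
      intro y hy
      by_contra h
      exact hy (hz y h)
    refine h1.trans ?_
    rintro _ ⟨w, hw, rfl⟩
    have := hu.2.2 hw
    rw [mem_ball, dist_eq_norm] at this
    rw [mem_ball_zero_iff, norm_smul, norm_inv, Real.norm_of_nonneg hr.le,
      inv_mul_lt_iff₀ hr, mul_one]
    exact this

theorem aux_gag_scale (N : ℕ) (p s : ℝ) (x0 : Euc N) (r : ℝ) (hr : 0 < r) (c : ℝ) (hc : 0 < c)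
    (u : Euc N → ℝ) :
    gag N p s (fun y => c * u (x0 + r • y)) = c ^ p * r ^ (s * p - N) * gag N p s u := by
  unfold gag
  set f : Euc N × Euc N → ℝ := fun z =>
    |u z.1 - u z.2| ^ p / ‖z.1 - z.2‖ ^ ((N : ℝ) + s * p) with hf
  have h1 : ∀ z : Euc N × Euc N, |c * u (x0 + r • z.1) - c * u (x0 + r • z.2)| ^ p /
      ‖z.1 - z.2‖ ^ ((N : ℝ) + s * p) =
      c ^ p * r ^ ((N : ℝ) + s * p) * f ((x0, x0) + r • z) := by
    rintro ⟨x, y⟩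
    simp only [hf, Prod.smul_mk, Prod.mk_add_mk, add_sub_add_left_eq_sub]
    rw [← mul_sub, abs_mul, abs_of_pos hc, Real.mul_rpow hc.le (abs_nonneg _), ← smul_sub,
      norm_smul, Real.norm_of_nonneg hr.le, Real.mul_rpow hr.le (norm_nonneg _)]
    have : r ^ ((N : ℝ) + s * p) ≠ 0 := (Real.rpow_pos_of_pos hr _).ne'
    rw [mul_div_assoc, mul_assoc, ← mul_div_assoc (r ^ ((N : ℝ) + s * p)), mul_div_mul_left _ _ this]
  simp_rw [h1]
  rw [integral_const_mul]
  have hH : (volume : Measure (Euc N × Euc N)).IsAddHaarMeasure :=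
    inferInstanceAs ((volume : Measure (Euc N)).prod volume).IsAddHaarMeasure
  have h2 := Measure.integral_comp_smul (volume : Measure (Euc N × Euc N))
    (fun z => f ((x0, x0) + z)) r
  rw [h2, integral_add_left_eq_self, Module.finrank_prod, finrank_euclideanSpace_fin, smul_eq_mul,
    abs_of_pos (by positivity), ← mul_assoc]
  congr 1
  rw [mul_assoc]
  congr 1
  rw [← Real.rpow_natCast, ← Real.rpow_neg hr.le, ← Real.rpow_add hr]
  congr 1
  push_cast
  ring

theorem aux_pow_scale (N : ℕ) (q : ℝ) (x0 : Euc N) (r : ℝ) (hr : 0 < r) (c : ℝ) (hc : 0 < c)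
    (u : Euc N → ℝ) :
    ∫ y, |c * u (x0 + r • y)| ^ q = c ^ q * (r ^ N)⁻¹ * ∫ x, |u x| ^ q := by
  simp_rw [abs_mul, abs_of_pos hc, Real.mul_rpow hc.le (abs_nonneg _)]
  rw [integral_const_mul]
  have h2 := Measure.integral_comp_smul (volume : Measure (Euc N))
    (fun z => |u (x0 + z)| ^ q) r
  rw [h2, integral_add_left_eq_self (fun z => |u z| ^ q), finrank_euclideanSpace_fin, smul_eq_mul,
    abs_of_pos (by positivity), ← mul_assoc]

theorem stmt16 (N : ℕ) (hN : 0 < N) (p q s : ℝ) (hp : 1 ≤ p) (hs0 : 0 < s) (hs1 : s < 1)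
    (hpq : p ≤ q) (hqc : s * p < N → q ≤ N * p / (N - s * p))
    (x0 : Euc N) (r : ℝ) (hr : 0 < r)
    (u : Euc N → ℝ) (hu : TestOn (ball x0 r) u) :
    (∫ x in ball x0 r, |u x| ^ q) ^ (p / q) ≤
      2 / lam N p q s (ball (0 : Euc N) 1) * r ^ (s * p - N + N * p / q) *
        ∫ x in ball x0 r, ∫ y, |u x - u y| ^ p / ‖x - y‖ ^ ((N : ℝ) + s * p) := by
  have hq : 0 < q := by linarith
  have hN' : (0 : ℝ) < N := Nat.cast_pos.2 hN
  obtain ⟨c₀, hc₀, hlow⟩ := aux_lower N hN p q s hp hs0 hs1 hpq hqc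
  have hJ0 : 0 ≤ ∫ x in ball x0 r, ∫ y, |u x - u y| ^ p / ‖x - y‖ ^ ((N : ℝ) + s * p) :=
    integral_nonneg fun x => integral_nonneg fun y => by positivity
  have hbdd : BddBelow { c | ∃ u : Euc N → ℝ, TestOn (ball (0 : Euc N) 1) u ∧
      (∫ x in ball (0 : Euc N) 1, |u x| ^ q) = 1 ∧ c = gag N p s u } := by
    refine ⟨c₀, ?_⟩
    rintro _ ⟨v, hv, hv1, rfl⟩
    exact hlow v hv hv1
  have hlam0 : 0 ≤ lam N p q s (ball (0 : Euc N) 1) := by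
    apply Real.sInf_nonneg
    rintro _ ⟨v, hv, hv1, rfl⟩
    exact hc₀.le.trans (hlow v hv hv1)
  have hI0 : 0 ≤ ∫ x in ball x0 r, |u x| ^ q := integral_nonneg fun x => by positivity
  rcases hI0.eq_or_lt with hI | hI
  · rw [← hI, Real.zero_rpow (by positivity)]
    positivity
  set I := ∫ x in ball x0 r, |u x| ^ q with hIdef
  set c := (r ^ N / I) ^ (1 / q) with hcdef
  have hc : 0 < c := by positivity
  set v : Euc N → ℝ := fun y => c * u (x0 + r • y) with hv
  have hvT : TestOn (ball (0 : Euc N) 1) v := aux_testOn_scale x0 r hr c u hu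
  have hv1 : (∫ x in ball (0 : Euc N) 1, |v x| ^ q) = 1 := by
    rw [aux_pow_setIntegral hvT hq, hv, aux_pow_scale N q x0 r hr c hc u,
      ← aux_pow_setIntegral hu hq, ← hIdef, hcdef, ← Real.rpow_mul (by positivity),
      one_div_mul_cancel hq.ne', Real.rpow_one]
    field_simp
  have hmem : gag N p s v ∈ { c | ∃ u : Euc N → ℝ, TestOn (ball (0 : Euc N) 1) u ∧
      (∫ x in ball (0 : Euc N) 1, |u x| ^ q) = 1 ∧ c = gag N p s u } := ⟨v, hvT, hv1, rfl⟩
  have hlam : 0 < lam N p q s (ball (0 : Euc N) 1) := by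
    refine hc₀.trans_le (le_csInf ⟨_, hmem⟩ ?_)
    rintro _ ⟨w, hw, hw1, rfl⟩
    exact hlow w hw hw1
  have hle : lam N p q s (ball (0 : Euc N) 1) ≤ gag N p s v := csInf_le hbdd hmem
  rw [hv, aux_gag_scale N p s x0 r hr c hc u] at hle
  have hg := aux_gag_le N hN p s hp hs0 hs1 x0 r u hu
  set J := ∫ x in ball x0 r, ∫ y, |u x - u y| ^ p / ‖x - y‖ ^ ((N : ℝ) + s * p) with hJ
  have hcp : c ^ p * I ^ (p / q) = r ^ (N * p / q) := by
    rw [hcdef, ← Real.rpow_mul (by positivity), Real.div_rpow (by positivity) hI.le,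
      one_div_mul_eq_div, div_mul_cancel₀ _ (Real.rpow_pos_of_pos hI _).ne',
      ← Real.rpow_natCast, ← Real.rpow_mul hr.le, mul_div_assoc]
  have hfin : I ^ (p / q) * lam N p q s (ball (0 : Euc N) 1) ≤
      r ^ (s * p - N + N * p / q) * (2 * J) := by
    calc I ^ (p / q) * lam N p q s (ball (0 : Euc N) 1)
        ≤ I ^ (p / q) * (c ^ p * r ^ (s * p - N) * (2 * J)) := by
          gcongr
          exact hle.trans (by gcongr)
      _ = (c ^ p * I ^ (p / q)) * r ^ (s * p - N) * (2 * J) := by ring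
      _ = _ := by rw [hcp, ← Real.rpow_add hr, add_comm]
  rw [← le_div_iff₀ hlam] at hfin
  calc _ ≤ _ := hfin
    _ = _ := by ring
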